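/- Let h : [0,∞) → [0,∞) be an operator monotone function with h(1) = 1 (i.e. the representing function of an operator mean), with h(x) > 0 for x > 0, that is geometrically concave, i.e. h(√(xy)) ≥ √(h(x)h(y)) for all x,y ≥ 0. For positive definite n×n complex matrices A, B define A σ B := A^{1/2} h(A^{-1/2} B A^{-1/2}) A^{1/2}. Then for every k = 1,…,n, setting a := (∏_{j=n+1-k}^n μ_j(A))^{1/k} and b := (∏_{j=1}^k μ_j(B))^{1/k}, one has (∏_{j=n+1-k}^n μ_j(A σ B))^{1/k} ≤ a·h(b/a). -/

import Mathlib

open scoped ComplexOrder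

section Defs

variable {n : ℕ}

/-- eigenvalues of a Hermitian matrix listed in increasing order -/
noncomputable def eigUp {A : Matrix (Fin n) (Fin n) ℂ} (hA : A.IsHermitian) : Fin n → ℝ :=
  fun i => hA.eigenvalues (Tuple.sort hA.eigenvalues i)

/-- eigenvalues of a Hermitian matrix listed in decreasing order: `eigDown hA i = μ_{i+1}(A)` -/
noncomputable def eigDown {A : Matrix (Fin n) (Fin n) ℂ} (hA : A.IsHermitian) : Fin n → ℝ :=
  fun i => eigUp hA i.rev

/-- the product of the `k` smallest eigenvalues, `∏_{j=1}^k μ_{n+1-j}(A)` -/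
noncomputable def prodSmall (A : Matrix (Fin n) (Fin n) ℂ) (k : ℕ) : ℝ :=
  if hA : A.IsHermitian then
    ∏ i ∈ Finset.univ.filter (fun i : Fin n => (i : ℕ) < k), eigUp hA i
  else 0

/-- the product of the `k` largest eigenvalues, `∏_{j=1}^k μ_j(A)` -/
noncomputable def prodLarge (A : Matrix (Fin n) (Fin n) ℂ) (k : ℕ) : ℝ :=
  if hA : A.IsHermitian then
    ∏ i ∈ Finset.univ.filter (fun i : Fin n => (i : ℕ) < k), eigDown hA i
  else 0

/-- the sum of the `k` smallest eigenvalues, `∑_{j=1}^k μ_{n+1-j}(A)` -/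
noncomputable def sumSmall (A : Matrix (Fin n) (Fin n) ℂ) (k : ℕ) : ℝ :=
  if hA : A.IsHermitian then
    ∑ i ∈ Finset.univ.filter (fun i : Fin n => (i : ℕ) < k), eigUp hA i
  else 0

/-- A doubly concave function on an interval `Ω ⊆ [0,∞)`. -/
structure DoublyConcaveOn (f : ℝ → ℝ) (Ω : Set ℝ) : Prop where
  subset_Ici : Ω ⊆ Set.Ici (0 : ℝ)
  nonneg : ∀ x ∈ Ω, 0 ≤ f x
  continuousOn : ContinuousOn f Ω
  concaveOn : ConcaveOn ℝ Ω f
  geomConcave : ∀ x ∈ Ω, ∀ y ∈ Ω, Real.sqrt (f x * f y) ≤ f (Real.sqrt (x * y))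

/-- `𝔼_p(Z) := (𝔼(Z^p))^{1/p}` -/
noncomputable def Ep {n m : ℕ} (E : Matrix (Fin n) (Fin n) ℂ →ₗ[ℂ] Matrix (Fin m) (Fin m) ℂ)
    (p : ℝ) (Z : Matrix (Fin n) (Fin n) ℂ) : Matrix (Fin m) (Fin m) ℂ :=
  cfc (fun x : ℝ => x ^ (1 / p)) (E (cfc (fun x : ℝ => x ^ p) Z))

/-- the power `p`-mean `A β_p B := ((A^p + B^p)/2)^{1/p}` -/
noncomputable def betaP (p : ℝ) (A B : Matrix (Fin n) (Fin n) ℂ) : Matrix (Fin n) (Fin n) ℂ :=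
  cfc (fun x : ℝ => x ^ (1 / p))
    ((2 : ℂ)⁻¹ • (cfc (fun x : ℝ => x ^ p) A + cfc (fun x : ℝ => x ^ p) B))

noncomputable def sqrtM (A : Matrix (Fin n) (Fin n) ℂ) : Matrix (Fin n) (Fin n) ℂ :=
  cfc Real.sqrt A

noncomputable def invSqrtM (A : Matrix (Fin n) (Fin n) ℂ) : Matrix (Fin n) (Fin n) ℂ :=
  cfc (fun x : ℝ => (Real.sqrt x)⁻¹) A

/-- operator mean with representing function `h`: `A σ B = A^{1/2} h(A^{-1/2} B A^{-1/2}) A^{1/2}` -/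
noncomputable def opMean (h : ℝ → ℝ) (A B : Matrix (Fin n) (Fin n) ℂ) :
    Matrix (Fin n) (Fin n) ℂ :=
  sqrtM A * cfc h (invSqrtM A * B * invSqrtM A) * sqrtM A

/-- the weighted geometric mean `A #_α B` -/
noncomputable def sharp (α : ℝ) (A B : Matrix (Fin n) (Fin n) ℂ) : Matrix (Fin n) (Fin n) ℂ :=
  sqrtM A * cfc (fun x : ℝ => x ^ α) (invSqrtM A * B * invSqrtM A) * sqrtM A

/-- the (real) determinant of a Hermitian matrix -/
noncomputable def rdet (A : Matrix (Fin n) (Fin n) ℂ) : ℝ := (A.det).re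

open Classical in
/-- the derived anti-norm `‖A‖_! = ‖A^{-p}‖^{-1/p}` for invertible positive `A`, `0` otherwise. -/
noncomputable def derivedAntiNorm (N : Matrix (Fin n) (Fin n) ℂ → ℝ) (p : ℝ)
    (A : Matrix (Fin n) (Fin n) ℂ) : ℝ :=
  if IsUnit A.det then (N (cfc (fun x : ℝ => x ^ (-p)) A)) ^ (-(1 / p)) else 0

end Defs

/-!
For a positive semidefinite `A` and an `n × k` matrix `X`, the Cauchy–Binet formula in an eigenbasis
of `A` expresses `det (Xᴴ A X)` as a combination of products of `k` eigenvalues, with weights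
summing to `det (Xᴴ X)`. So `det (Xᴴ A X) / det (Xᴴ X)` has as extremal values the products of the
`k` smallest and of the `k` largest eigenvalues of `A`, written `small` and `large` below.

Testing this principle on suitable `X` yields `small (Rᴴ D R) ≤ large D * small (Rᴴ R)` and, for
invertible `R`, `large C * small (Rᴴ R) ≤ large (Rᴴ C R)`. Take `R = A^{1/2}`,
`C = A^{-1/2} B A^{-1/2}` and `D = h(C)`: then `Rᴴ R = A`, `Rᴴ C R = B` and `Rᴴ D R = A σ B`.
Geometric concavity, in the form of Jensen's inequality for `t ↦ log h(exp t)`, and monotonicity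
of `h` give `large (h(C)) ≤ h((large C)^{1/k})^k`, which links the two estimates.
-/

open Matrix

section CauchyBinet

variable {R m n : Type*} [CommRing R] [Fintype m] [DecidableEq m]

/-- The Cauchy–Binet formula. Summing over all maps `p` instead of the subsets of `n` of cardinality
`card m` counts each subset `(card m)!` times, and needs no ordering of the index types. -/
theorem factorial_card_mul_det_mul [Fintype n] (M : Matrix m n R) (N : Matrix n m R) :
    ((Fintype.card m).factorial : R) * (M * N).det =
      ∑ p : m → n, (M.submatrix id p).det * (N.submatrix p id).det := by
  classical
  have det_expand : (M * N).det = ∑ p : m → n, (M.submatrix id p).det * ∏ i, N (p i) i := by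
    simp only [det_apply', mul_apply, Finset.prod_univ_sum, Finset.mul_sum,
      Fintype.piFinset_univ, Finset.sum_mul]
    rw [Finset.sum_comm]
    simp [Finset.prod_mul_distrib, mul_assoc]
  have det_expand_perm (τ : Equiv.Perm m) : (M * N).det =
      ∑ p : m → n, (M.submatrix id p).det * (Equiv.Perm.sign τ * ∏ i, N (p (τ i)) i) := by
    rw [det_expand, ← (Equiv.arrowCongr τ.symm (Equiv.refl n)).sum_comp]
    refine Finset.sum_congr rfl fun p _ => ?_
    have det_comp : (M.submatrix id (p ∘ τ)).det =
        Equiv.Perm.sign τ * (M.submatrix id p).det := det_permute' τ (M.submatrix id p)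
    change (M.submatrix id (p ∘ τ)).det * ∏ i, N (p (τ i)) i = _
    rw [det_comp]
    ring
  calc ((Fintype.card m).factorial : R) * (M * N).det
      = ∑ _τ : Equiv.Perm m, (M * N).det := by simp [Fintype.card_perm]
    _ = ∑ p : m → n, (M.submatrix id p).det * (N.submatrix p id).det := by
      rw [Finset.sum_congr rfl fun τ _ => det_expand_perm τ, Finset.sum_comm]
      simp [det_apply', Finset.mul_sum]

theorem factorial_card_mul_det_conjTranspose_mul_diagonal_mul [Fintype n] [DecidableEq n]
    [StarRing R] (d : n → R) (Y : Matrix n m R) :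
    ((Fintype.card m).factorial : R) * (Yᴴ * diagonal d * Y).det =
      ∑ p : m → n, (∏ i, d (p i)) * (star (Y.submatrix p id).det * (Y.submatrix p id).det) := by
  rw [factorial_card_mul_det_mul]
  refine Finset.sum_congr rfl fun p _ => ?_
  have weighted_columns : (Yᴴ * diagonal d).submatrix id p =
      (Y.submatrix p id)ᴴ * diagonal (d ∘ p) := by
    ext i j
    simp [mul_diagonal]
  rw [weighted_columns, det_mul, det_conjTranspose, det_diagonal]
  simp only [Function.comp_apply]
  ring

theorem det_submatrix_eq_zero_of_not_injective (Y : Matrix n m R) {p : m → n}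
    (hp : ¬ Function.Injective p) : (Y.submatrix p id).det = 0 := by
  obtain ⟨i, j, hij, hne⟩ := Function.not_injective_iff.mp hp
  exact det_zero_of_row_eq hne (by ext; simp [hij])

end CauchyBinet

section Compression

variable {𝕜 m n : Type*} [RCLike 𝕜] [Fintype m] [DecidableEq m] [Fintype n] [DecidableEq n]

theorem mul_det_conjTranspose_mul_diagonal_mul_le {a b : 𝕜} {d e : n → 𝕜}
    (hde : ∀ p : m ↪ n, a * ∏ i, d (p i) ≤ b * ∏ i, e (p i)) (Y : Matrix n m 𝕜) :
    a * (Yᴴ * diagonal d * Y).det ≤ b * (Yᴴ * diagonal e * Y).det := by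
  have factorial_pos : (0 : 𝕜) < (Fintype.card m).factorial := by positivity
  refine le_of_mul_le_mul_left ?_ factorial_pos
  rw [mul_left_comm, factorial_card_mul_det_conjTranspose_mul_diagonal_mul, mul_left_comm,
    factorial_card_mul_det_conjTranspose_mul_diagonal_mul, Finset.mul_sum, Finset.mul_sum]
  refine Finset.sum_le_sum fun p _ => ?_
  by_cases hp : Function.Injective p
  · rw [← mul_assoc, ← mul_assoc b]
    exact mul_le_mul_of_nonneg_right (hde ⟨p, hp⟩) (star_mul_self_nonneg _)
  · simp [det_submatrix_eq_zero_of_not_injective Y hp]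

variable {A : Matrix n n 𝕜} (hA : A.IsHermitian)

include hA in
theorem cfc_eq_eigenvectorUnitary_mul_diagonal_mul (f : ℝ → ℝ) :
    cfc f A = (hA.eigenvectorUnitary : Matrix n n 𝕜) *
      diagonal (fun i => (f (hA.eigenvalues i) : 𝕜)) *
      (hA.eigenvectorUnitary : Matrix n n 𝕜)ᴴ := by
  rw [hA.cfc_eq, Matrix.IsHermitian.cfc, Unitary.conjStarAlgAut_apply]
  rfl

include hA in
open scoped MatrixOrder in
theorem posSemidef_cfc {f : ℝ → ℝ} (hf : ∀ i, 0 ≤ f (hA.eigenvalues i)) :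
    (cfc f A).PosSemidef := by
  refine nonneg_iff_posSemidef.mp (cfc_nonneg fun x hx => ?_)
  rw [hA.spectrum_real_eq_range_eigenvalues] at hx
  obtain ⟨i, rfl⟩ := hx
  exact hf i

theorem mul_det_conjTranspose_mul_cfc_mul_le {a b : ℝ} {f g : ℝ → ℝ}
    (hfg : ∀ p : m ↪ n,
      a * ∏ i, f (hA.eigenvalues (p i)) ≤ b * ∏ i, g (hA.eigenvalues (p i)))
    (X : Matrix n m 𝕜) :
    (a : 𝕜) * (Xᴴ * cfc f A * X).det ≤ b * (Xᴴ * cfc g A * X).det := by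
  have diagonalized (f : ℝ → ℝ) : Xᴴ * cfc f A * X =
      ((hA.eigenvectorUnitary : Matrix n n 𝕜)ᴴ * X)ᴴ *
        diagonal (fun i => (f (hA.eigenvalues i) : 𝕜)) *
        ((hA.eigenvectorUnitary : Matrix n n 𝕜)ᴴ * X) := by
    simp only [cfc_eq_eigenvectorUnitary_mul_diagonal_mul hA, conjTranspose_mul,
      conjTranspose_conjTranspose, Matrix.mul_assoc]
  rw [diagonalized, diagonalized]
  exact mul_det_conjTranspose_mul_diagonal_mul_le (fun p => mod_cast hfg p) _

theorem exists_isometry_det_eq_prod_eigenvalues (p : m ↪ n) :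
    ∃ V : Matrix n m 𝕜, Vᴴ * V = 1 ∧ (Vᴴ * A * V).det = (∏ i, hA.eigenvalues (p i) : ℝ) := by
  set U := (hA.eigenvectorUnitary : Matrix n n 𝕜)
  have unitary : Uᴴ * U = 1 := Unitary.coe_star_mul_self _
  have diagonalized : Uᴴ * A * U = diagonal (RCLike.ofReal ∘ hA.eigenvalues) := by
    simpa [Unitary.conjStarAlgAut_star_apply, star_eq_conjTranspose] using
      hA.conjStarAlgAut_star_eigenvectorUnitary
  refine ⟨U.submatrix id p, ?_, ?_⟩
  · calc (U.submatrix id p)ᴴ * U.submatrix id p = (Uᴴ * U).submatrix p p := rfl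
      _ = 1 := by rw [unitary, submatrix_one_embedding]
  · calc ((U.submatrix id p)ᴴ * A * U.submatrix id p).det
        = ((Uᴴ * A * U).submatrix p p).det := rfl
      _ = (∏ i, hA.eigenvalues (p i) : ℝ) := by
        simp [diagonalized, submatrix_diagonal_embedding]

end Compression

section OrderedProducts

variable {R : Type*} [CommSemiring R] {k n : ℕ}

theorem prod_filter_val_lt (hkn : k ≤ n) (e : Fin n → R) :
    ∏ i with (i : Fin n).val < k, e i = ∏ i : Fin k, e (Fin.castLE hkn i) := by
  change _ = ∏ i, e (Fin.castLEEmb hkn i)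
  rw [← Finset.prod_map Finset.univ (Fin.castLEEmb hkn) e]
  congr 1
  ext i
  simpa using ⟨fun hi => ⟨⟨i, hi⟩, rfl⟩, by rintro ⟨j, rfl⟩; exact j.isLt⟩

theorem val_le_val_of_strictMono {q : Fin k → Fin n} (hq : StrictMono q) (i : Fin k) :
    (i : ℕ) ≤ q i := by
  simpa using Finset.card_le_card_of_injOn (s := Finset.Iio i) (t := Finset.Iio (q i)) q
    (fun j hj => by simpa using hq (by simpa using hj)) hq.injective.injOn

theorem exists_perm_castLE_le (hkn : k ≤ n) (p : Fin k ↪ Fin n) :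
    ∃ τ : Equiv.Perm (Fin k), ∀ i, Fin.castLE hkn i ≤ p (τ i) :=
  ⟨Tuple.sort p, fun i => val_le_val_of_strictMono ((Tuple.monotone_sort p).strictMono_of_injective
    (p.injective.comp (Equiv.injective _))) i⟩

variable [PartialOrder R] [IsOrderedRing R] {e : Fin n → R}

theorem prod_filter_val_lt_le_prod (he : Monotone e) (he0 : ∀ i, 0 ≤ e i) (p : Fin k ↪ Fin n) :
    ∏ i with (i : Fin n).val < k, e i ≤ ∏ i, e (p i) := by
  have hkn : k ≤ n := by simpa using Fintype.card_le_of_embedding p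
  obtain ⟨τ, hτ⟩ := exists_perm_castLE_le hkn p
  rw [prod_filter_val_lt hkn, ← Equiv.prod_comp τ fun i => e (p i)]
  exact Finset.prod_le_prod (fun i _ => he0 _) fun i _ => he (hτ i)

theorem prod_le_prod_filter_val_lt (he : Antitone e) (he0 : ∀ i, 0 ≤ e i) (p : Fin k ↪ Fin n) :
    ∏ i, e (p i) ≤ ∏ i with (i : Fin n).val < k, e i := by
  have hkn : k ≤ n := by simpa using Fintype.card_le_of_embedding p
  obtain ⟨τ, hτ⟩ := exists_perm_castLE_le hkn p
  rw [prod_filter_val_lt hkn, ← Equiv.prod_comp τ fun i => e (p i)]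
  exact Finset.prod_le_prod (fun i _ => he0 _) fun i _ => he (hτ i)

end OrderedProducts

section ExtremalProducts

variable {n k : ℕ} {A : Matrix (Fin n) (Fin n) ℂ}

theorem monotone_eigUp (hA : A.IsHermitian) : Monotone (eigUp hA) :=
  Tuple.monotone_sort hA.eigenvalues

theorem antitone_eigDown (hA : A.IsHermitian) : Antitone (eigDown hA) :=
  fun _ _ hij => monotone_eigUp hA (Fin.rev_le_rev.mpr hij)

theorem exists_prod_eigenvalues_eq_prodSmall (hA : A.IsHermitian) (hkn : k ≤ n) :
    ∃ p : Fin k ↪ Fin n, ∏ i, hA.eigenvalues (p i) = prodSmall A k := by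
  refine ⟨(Fin.castLEEmb hkn).trans (Tuple.sort hA.eigenvalues).toEmbedding, ?_⟩
  rw [prodSmall, dif_pos hA, prod_filter_val_lt hkn]
  rfl

theorem exists_prod_eigenvalues_eq_prodLarge (hA : A.IsHermitian) (hkn : k ≤ n) :
    ∃ p : Fin k ↪ Fin n, ∏ i, hA.eigenvalues (p i) = prodLarge A k := by
  refine ⟨(Fin.castLEEmb hkn).trans
    (Fin.revPerm.trans (Tuple.sort hA.eigenvalues)).toEmbedding, ?_⟩
  rw [prodLarge, dif_pos hA, prod_filter_val_lt hkn]
  rfl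

theorem prodSmall_le_prod_eigenvalues (hA : A.PosSemidef) (p : Fin k ↪ Fin n) :
    prodSmall A k ≤ ∏ i, hA.isHermitian.eigenvalues (p i) := by
  rw [prodSmall, dif_pos hA.isHermitian]
  simpa [eigUp] using prod_filter_val_lt_le_prod (monotone_eigUp hA.isHermitian)
    (fun _ => hA.eigenvalues_nonneg _)
    (p.trans (Tuple.sort hA.isHermitian.eigenvalues).symm.toEmbedding)

theorem prod_eigenvalues_le_prodLarge (hA : A.PosSemidef) (p : Fin k ↪ Fin n) :
    ∏ i, hA.isHermitian.eigenvalues (p i) ≤ prodLarge A k := by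
  rw [prodLarge, dif_pos hA.isHermitian]
  simpa [eigDown, eigUp] using prod_le_prod_filter_val_lt (antitone_eigDown hA.isHermitian)
    (fun _ => hA.eigenvalues_nonneg _)
    (p.trans ((Tuple.sort hA.isHermitian.eigenvalues).symm.trans Fin.revPerm).toEmbedding)

theorem prodSmall_nonneg (hA : A.PosSemidef) : 0 ≤ prodSmall A k := by
  rw [prodSmall, dif_pos hA.isHermitian]
  exact Finset.prod_nonneg fun _ _ => hA.eigenvalues_nonneg _

theorem prodSmall_pos (hA : A.PosDef) : 0 < prodSmall A k := by
  rw [prodSmall, dif_pos hA.isHermitian]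
  exact Finset.prod_pos fun _ _ => hA.eigenvalues_pos _

theorem prodLarge_nonneg (hA : A.PosSemidef) : 0 ≤ prodLarge A k := by
  rw [prodLarge, dif_pos hA.isHermitian]
  exact Finset.prod_nonneg fun _ _ => hA.eigenvalues_nonneg _

theorem prodLarge_pos (hA : A.PosDef) : 0 < prodLarge A k := by
  rw [prodLarge, dif_pos hA.isHermitian]
  exact Finset.prod_pos fun _ _ => hA.eigenvalues_pos _

theorem prodSmall_mul_det_le_det (hA : A.PosSemidef) (X : Matrix (Fin n) (Fin k) ℂ) :
    (prodSmall A k : ℂ) * (Xᴴ * X).det ≤ (Xᴴ * A * X).det := by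
  have compression := mul_det_conjTranspose_mul_cfc_mul_le hA.isHermitian (a := prodSmall A k)
    (b := 1) (f := fun _ => 1) (g := id)
    (fun p => by simpa using prodSmall_le_prod_eigenvalues hA p) X
  rw [cfc_const_one ℝ A hA.isHermitian.isSelfAdjoint, cfc_id ℝ A hA.isHermitian.isSelfAdjoint]
    at compression
  simpa using compression

theorem det_le_prodLarge_mul_det (hA : A.PosSemidef) (X : Matrix (Fin n) (Fin k) ℂ) :
    (Xᴴ * A * X).det ≤ (prodLarge A k : ℂ) * (Xᴴ * X).det := by
  have compression := mul_det_conjTranspose_mul_cfc_mul_le hA.isHermitian (a := 1)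
    (b := prodLarge A k) (f := id) (g := fun _ => 1)
    (fun p => by simpa using prod_eigenvalues_le_prodLarge hA p) X
  rw [cfc_const_one ℝ A hA.isHermitian.isSelfAdjoint, cfc_id ℝ A hA.isHermitian.isSelfAdjoint]
    at compression
  simpa using compression

theorem exists_isometry_det_eq_prodSmall (hA : A.IsHermitian) (hkn : k ≤ n) :
    ∃ V : Matrix (Fin n) (Fin k) ℂ, Vᴴ * V = 1 ∧ (Vᴴ * A * V).det = prodSmall A k := by
  obtain ⟨p, hp⟩ := exists_prod_eigenvalues_eq_prodSmall hA hkn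
  exact hp ▸ exists_isometry_det_eq_prod_eigenvalues hA p

theorem exists_isometry_det_eq_prodLarge (hA : A.IsHermitian) (hkn : k ≤ n) :
    ∃ V : Matrix (Fin n) (Fin k) ℂ, Vᴴ * V = 1 ∧ (Vᴴ * A * V).det = prodLarge A k := by
  obtain ⟨p, hp⟩ := exists_prod_eigenvalues_eq_prodLarge hA hkn
  exact hp ▸ exists_isometry_det_eq_prod_eigenvalues hA p

theorem prodLarge_cfc_le (hA : A.IsHermitian) (hkn : k ≤ n) {f : ℝ → ℝ} {c : ℝ}
    (hc : ∀ p : Fin k ↪ Fin n, ∏ i, f (hA.eigenvalues (p i)) ≤ c) :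
    prodLarge (cfc f A) k ≤ c := by
  obtain ⟨V, isometry, det_eq⟩ :=
    exists_isometry_det_eq_prodLarge (cfc_predicate (p := IsSelfAdjoint) f A) hkn
  have compression := mul_det_conjTranspose_mul_cfc_mul_le hA (a := 1) (b := c) (f := f)
    (g := fun _ => 1) (fun p => by simpa using hc p) V
  rw [cfc_const_one ℝ A hA.isSelfAdjoint, Matrix.mul_one, isometry, det_eq] at compression
  simpa using compression

theorem prodSmall_conjTranspose_mul_mul_le (hA : A.PosSemidef) (R : Matrix (Fin n) (Fin n) ℂ)
    (hkn : k ≤ n) : prodSmall (Rᴴ * A * R) k ≤ prodLarge A k * prodSmall (Rᴴ * R) k := by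
  obtain ⟨V, isometry, det_eq⟩ :=
    exists_isometry_det_eq_prodSmall (isHermitian_conjTranspose_mul_self R) hkn
  have gram : (R * V)ᴴ * (R * V) = Vᴴ * (Rᴴ * R) * V := by
    simp only [conjTranspose_mul, Matrix.mul_assoc]
  have compression : Vᴴ * (Rᴴ * A * R) * V = (R * V)ᴴ * A * (R * V) := by
    simp only [conjTranspose_mul, Matrix.mul_assoc]
  have : (prodSmall (Rᴴ * A * R) k : ℂ) ≤ prodLarge A k * prodSmall (Rᴴ * R) k :=
    calc (prodSmall (Rᴴ * A * R) k : ℂ)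
        = prodSmall (Rᴴ * A * R) k * (Vᴴ * V).det := by rw [isometry, det_one, mul_one]
      _ ≤ ((R * V)ᴴ * A * (R * V)).det :=
          compression ▸ prodSmall_mul_det_le_det (hA.conjTranspose_mul_mul_same R) V
      _ ≤ prodLarge A k * ((R * V)ᴴ * (R * V)).det := det_le_prodLarge_mul_det hA (R * V)
      _ = prodLarge A k * prodSmall (Rᴴ * R) k := by rw [gram, det_eq]
  exact_mod_cast this

theorem prodLarge_mul_prodSmall_le_prodLarge_conjTranspose_mul_mul (hA : A.PosSemidef)
    {R : Matrix (Fin n) (Fin n) ℂ} (hR : IsUnit R) (hkn : k ≤ n) :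
    prodLarge A k * prodSmall (Rᴴ * R) k ≤ prodLarge (Rᴴ * A * R) k := by
  obtain ⟨V, isometry, det_eq⟩ := exists_isometry_det_eq_prodLarge hA.isHermitian hkn
  obtain ⟨X, rfl⟩ : ∃ X, R * X = V :=
    ⟨R⁻¹ * V, mul_nonsing_inv_cancel_left _ _ ((isUnit_iff_isUnit_det R).mp hR)⟩
  have gram : Xᴴ * (Rᴴ * R) * X = 1 := by
    rw [← isometry]
    simp only [conjTranspose_mul, Matrix.mul_assoc]
  have compression : (R * X)ᴴ * A * (R * X) = Xᴴ * (Rᴴ * A * R) * X := by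
    simp only [conjTranspose_mul, Matrix.mul_assoc]
  have hsmall : (0 : ℂ) ≤ prodSmall (Rᴴ * R) k :=
    mod_cast prodSmall_nonneg (posSemidef_conjTranspose_mul_self R)
  have hlarge : (0 : ℂ) ≤ prodLarge (Rᴴ * A * R) k :=
    mod_cast prodLarge_nonneg (hA.conjTranspose_mul_mul_same R)
  have : (prodLarge A k : ℂ) * prodSmall (Rᴴ * R) k ≤ prodLarge (Rᴴ * A * R) k :=
    calc (prodLarge A k : ℂ) * prodSmall (Rᴴ * R) k
        = prodSmall (Rᴴ * R) k * (Xᴴ * (Rᴴ * A * R) * X).det := by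
          rw [← compression, det_eq, mul_comm]
      _ ≤ prodSmall (Rᴴ * R) k * (prodLarge (Rᴴ * A * R) k * (Xᴴ * X).det) :=
          mul_le_mul_of_nonneg_left
            (det_le_prodLarge_mul_det (hA.conjTranspose_mul_mul_same R) X) hsmall
      _ = prodLarge (Rᴴ * A * R) k * (prodSmall (Rᴴ * R) k * (Xᴴ * X).det) := mul_left_comm _ _ _
      _ ≤ prodLarge (Rᴴ * A * R) k * (Xᴴ * (Rᴴ * R) * X).det :=
          mul_le_mul_of_nonneg_left
            (prodSmall_mul_det_le_det (posSemidef_conjTranspose_mul_self R) X) hlarge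
      _ = prodLarge (Rᴴ * A * R) k := by rw [gram, det_one, mul_one]
  exact_mod_cast this

end ExtremalProducts

section Jensen

variable {E : Type*} [AddCommGroup E] [Module ℝ E] {g : E → ℝ} {k : ℕ}

/-- Jensen's inequality for a concave function `g` at `k` equally weighted points, with the factor
`1 / k` cleared. It is a property of each `k` separately so that it can be proved by
forward-backward induction on `k`. -/
def JensenAt (g : E → ℝ) (k : ℕ) : Prop :=
  ∀ x : Fin k → E, ∑ i, g (x i) ≤ k * g ((k : ℝ)⁻¹ • ∑ i, x i)

theorem JensenAt.double (hg : ∀ x y, (g x + g y) / 2 ≤ g (midpoint ℝ x y)) (hk : JensenAt g k) :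
    JensenAt g (2 * k) := by
  rw [two_mul]
  intro x
  rw [Fin.sum_univ_add, Fin.sum_univ_add]
  have left := hk fun i => x (Fin.castAdd k i)
  have right := hk fun i => x (Fin.natAdd k i)
  set y := ∑ i, x (Fin.castAdd k i)
  set z := ∑ i, x (Fin.natAdd k i)
  have average : midpoint ℝ ((k : ℝ)⁻¹ • y) ((k : ℝ)⁻¹ • z) =
      (((k + k : ℕ) : ℝ)⁻¹) • (y + z) := by
    rw [midpoint_eq_smul_add, ← smul_add, smul_smul, invOf_eq_inv, ← mul_inv]
    push_cast
    rw [two_mul]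
  have mid := mul_le_mul_of_nonneg_left (hg ((k : ℝ)⁻¹ • y) ((k : ℝ)⁻¹ • z))
    (by positivity : (0 : ℝ) ≤ 2 * k)
  rw [average] at mid
  push_cast at mid ⊢
  linarith

theorem JensenAt.of_succ (hk : JensenAt g (k + 1)) : JensenAt g k := by
  intro x
  rcases eq_or_ne k 0 with rfl | hk0
  · simp
  set M := (k : ℝ)⁻¹ • ∑ i, x i with hM
  have sum_eq : ∑ i, x i = (k : ℝ) • M := by rw [hM, smul_inv_smul₀ (mod_cast hk0)]
  have average : ((k + 1 : ℕ) : ℝ)⁻¹ • (∑ i, x i + M) = M := by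
    rw [sum_eq, inv_smul_eq_iff₀ (by positivity)]
    push_cast
    module
  have padded := hk (Fin.snoc x M)
  simp only [Fin.sum_univ_castSucc, Fin.snoc_castSucc, Fin.snoc_last, average] at padded
  push_cast at padded
  linarith

theorem jensenAt_of_midpoint_concave (hg : ∀ x y, (g x + g y) / 2 ≤ g (midpoint ℝ x y)) (k : ℕ) :
    JensenAt g k :=
  Nat.cauchy_induction_two_mul (fun _ => JensenAt.of_succ) 0 (fun x => by simp)
    (fun _ _ => JensenAt.double hg) k

theorem prod_le_pow_of_geometrically_concave {h : ℝ → ℝ} (hpos : ∀ x, 0 < x → 0 < h x)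
    (hconc : ∀ x y, 0 < x → 0 < y → √(h x * h y) ≤ h √(x * y))
    {x : Fin k → ℝ} (hx : ∀ i, 0 < x i) :
    ∏ i, h (x i) ≤ h ((∏ i, x i) ^ (k : ℝ)⁻¹) ^ k := by
  have log_midpoint (s t : ℝ) : (Real.log (h (Real.exp s)) + Real.log (h (Real.exp t))) / 2 ≤
      Real.log (h (Real.exp (midpoint ℝ s t))) := by
    have hs := hpos _ (Real.exp_pos s)
    have ht := hpos _ (Real.exp_pos t)
    have sqrt_exp : √(Real.exp s * Real.exp t) = Real.exp (midpoint ℝ s t) := by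
      rw [← Real.exp_add, ← Real.exp_half, midpoint_eq_smul_add, invOf_eq_inv, smul_eq_mul,
        inv_mul_eq_div]
    calc (Real.log (h (Real.exp s)) + Real.log (h (Real.exp t))) / 2
        = Real.log √(h (Real.exp s) * h (Real.exp t)) := by
          rw [Real.log_sqrt (by positivity), Real.log_mul hs.ne' ht.ne']
      _ ≤ Real.log (h (Real.exp (midpoint ℝ s t))) :=
          Real.log_le_log (by positivity)
            (sqrt_exp ▸ hconc _ _ (Real.exp_pos s) (Real.exp_pos t))
  have hprod : 0 < ∏ i, x i := Finset.prod_pos fun i _ => hx i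
  have geometric_mean : Real.exp ((k : ℝ)⁻¹ • ∑ i, Real.log (x i)) = (∏ i, x i) ^ (k : ℝ)⁻¹ := by
    rw [← Real.log_prod fun i _ => (hx i).ne', Real.rpow_def_of_pos hprod, smul_eq_mul, mul_comm]
  have jensen := jensenAt_of_midpoint_concave log_midpoint k fun i => Real.log (x i)
  simp only [geometric_mean, Real.exp_log (hx _)] at jensen
  rw [← Real.log_prod fun i _ => (hpos _ (hx i)).ne', ← Real.log_pow] at jensen
  exact (Real.log_le_log_iff (Finset.prod_pos fun i _ => hpos _ (hx i))
    (pow_pos (hpos _ (by positivity)) _)).mp jensen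

end Jensen

section OperatorMean

theorem monotoneOn_of_cfc_monotone {𝕜 m : Type*} [RCLike 𝕜] [Fintype m] [DecidableEq m]
    [Nonempty m] {h : ℝ → ℝ}
    (hmono : ∀ X Y : Matrix m m 𝕜, X.PosSemidef → (Y - X).PosSemidef →
      (cfc h Y - cfc h X).PosSemidef) : MonotoneOn h (Set.Ici 0) := by
  have posSemidef_algebraMap (t : ℝ) : (algebraMap ℝ (Matrix m m 𝕜) t).PosSemidef ↔ 0 ≤ t := by
    simp [Matrix.algebraMap_eq_diagonal, posSemidef_diagonal_iff]
  intro x hx y _ hxy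
  have image_le := hmono (algebraMap ℝ _ x) (algebraMap ℝ _ y)
    ((posSemidef_algebraMap x).mpr hx)
    (by rwa [← map_sub, posSemidef_algebraMap, sub_nonneg])
  rwa [cfc_algebraMap, cfc_algebraMap, ← map_sub, posSemidef_algebraMap, sub_nonneg] at image_le

theorem monotoneOn_comp_rpow_inv_pow {h : ℝ → ℝ} (hpos : ∀ x, 0 < x → 0 < h x)
    (hmono : MonotoneOn h (Set.Ioi 0)) (k : ℕ) :
    MonotoneOn (fun x => h (x ^ (k : ℝ)⁻¹) ^ k) (Set.Ioi 0) := by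
  intro x hx y hy hxy
  have hx_root : 0 < x ^ (k : ℝ)⁻¹ := Real.rpow_pos_of_pos hx _
  have hy_root : 0 < y ^ (k : ℝ)⁻¹ := Real.rpow_pos_of_pos hy _
  have root_le : x ^ (k : ℝ)⁻¹ ≤ y ^ (k : ℝ)⁻¹ :=
    Real.rpow_le_rpow (Set.mem_Ioi.mp hx).le hxy (by positivity)
  exact pow_le_pow_left₀ (hpos _ hx_root).le (hmono hx_root hy_root root_le) k

variable {n k : ℕ} {A B : Matrix (Fin n) (Fin n) ℂ} {h : ℝ → ℝ}

theorem isHermitian_sqrtM (A : Matrix (Fin n) (Fin n) ℂ) : (sqrtM A).IsHermitian :=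
  cfc_predicate (p := IsSelfAdjoint) _ A

theorem isHermitian_invSqrtM (A : Matrix (Fin n) (Fin n) ℂ) : (invSqrtM A).IsHermitian :=
  cfc_predicate (p := IsSelfAdjoint) _ A

open scoped MatrixOrder in
theorem sqrtM_mul_self (hA : A.PosSemidef) : sqrtM A * sqrtM A = A := by
  have hA0 : 0 ≤ A := nonneg_iff_posSemidef.mpr hA
  rw [sqrtM, ← cfcₙ_eq_cfc, ← CFC.sqrt_eq_real_sqrt A, CFC.sqrt_mul_sqrt_self A]

theorem sqrtM_mul_invSqrtM (hA : A.PosDef) : sqrtM A * invSqrtM A = 1 := by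
  have continuousOn (f : ℝ → ℝ) : ContinuousOn f (spectrum ℝ A) :=
    Matrix.finite_real_spectrum.continuousOn f
  have hsa : IsSelfAdjoint A := hA.isHermitian
  rw [sqrtM, invSqrtM, ← cfc_mul _ _ _ (continuousOn _) (continuousOn _), ← cfc_const_one ℝ A]
  refine cfc_congr fun x hx => ?_
  rw [hA.isHermitian.spectrum_real_eq_range_eigenvalues] at hx
  obtain ⟨i, rfl⟩ := hx
  exact mul_inv_cancel₀ (Real.sqrt_pos.mpr (hA.eigenvalues_pos i)).ne'

theorem invSqrtM_mul_sqrtM (hA : A.PosDef) : invSqrtM A * sqrtM A = 1 :=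
  mul_eq_one_comm.mp (sqrtM_mul_invSqrtM hA)

theorem posDef_invSqrtM_mul_mul (hA : A.PosDef) (hB : B.PosDef) :
    (invSqrtM A * B * invSqrtM A).PosDef := by
  have := hB.conjTranspose_mul_mul_same (B := invSqrtM A)
    (mulVec_injective_of_isUnit (IsUnit.of_mul_eq_one _ (invSqrtM_mul_sqrtM hA)))
  rwa [isHermitian_invSqrtM] at this

theorem sqrtM_mul_invSqrtM_mul_mul (hA : A.PosDef) (B : Matrix (Fin n) (Fin n) ℂ) :
    sqrtM A * (invSqrtM A * B * invSqrtM A) * sqrtM A = B := by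
  calc sqrtM A * (invSqrtM A * B * invSqrtM A) * sqrtM A
      = (sqrtM A * invSqrtM A) * B * (invSqrtM A * sqrtM A) := by simp only [Matrix.mul_assoc]
    _ = B := by rw [sqrtM_mul_invSqrtM hA, invSqrtM_mul_sqrtM hA, Matrix.one_mul, Matrix.mul_one]

theorem posSemidef_cfc_of_posDef {C : Matrix (Fin n) (Fin n) ℂ} (hC : C.PosDef)
    (hpos : ∀ x, 0 < x → 0 < h x) : (cfc h C).PosSemidef :=
  posSemidef_cfc hC.isHermitian fun i => (hpos _ (hC.eigenvalues_pos i)).le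

theorem posSemidef_opMean (hA : A.PosDef) (hB : B.PosDef) (hpos : ∀ x, 0 < x → 0 < h x) :
    (opMean h A B).PosSemidef := by
  have := (posSemidef_cfc_of_posDef (posDef_invSqrtM_mul_mul hA hB)
    hpos).conjTranspose_mul_mul_same (sqrtM A)
  rwa [isHermitian_sqrtM] at this

theorem prodLarge_cfc_le_of_geometrically_concave {C : Matrix (Fin n) (Fin n) ℂ} (hC : C.PosDef)
    (hpos : ∀ x, 0 < x → 0 < h x) (hmono : MonotoneOn h (Set.Ioi 0))
    (hconc : ∀ x y, 0 < x → 0 < y → √(h x * h y) ≤ h √(x * y)) (hkn : k ≤ n) :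
    prodLarge (cfc h C) k ≤ h (prodLarge C k ^ (k : ℝ)⁻¹) ^ k := by
  refine prodLarge_cfc_le hC.isHermitian hkn fun p => ?_
  have hprod : 0 < ∏ i, hC.isHermitian.eigenvalues (p i) :=
    Finset.prod_pos fun i _ => hC.eigenvalues_pos _
  calc ∏ i, h (hC.isHermitian.eigenvalues (p i))
      ≤ h ((∏ i, hC.isHermitian.eigenvalues (p i)) ^ (k : ℝ)⁻¹) ^ k :=
        prod_le_pow_of_geometrically_concave hpos hconc fun i => hC.eigenvalues_pos _
    _ ≤ h (prodLarge C k ^ (k : ℝ)⁻¹) ^ k :=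
        monotoneOn_comp_rpow_inv_pow hpos hmono k hprod (prodLarge_pos hC)
          (prod_eigenvalues_le_prodLarge hC.posSemidef p)

theorem prodLarge_invSqrtM_mul_mul_le (hA : A.PosDef) (hB : B.PosDef) (hkn : k ≤ n) :
    prodLarge (invSqrtM A * B * invSqrtM A) k ≤ prodLarge B k / prodSmall A k := by
  have congruence := prodLarge_mul_prodSmall_le_prodLarge_conjTranspose_mul_mul
    (posDef_invSqrtM_mul_mul hA hB).posSemidef
    (IsUnit.of_mul_eq_one _ (sqrtM_mul_invSqrtM hA)) hkn
  rwa [isHermitian_sqrtM, sqrtM_mul_self hA.posSemidef, sqrtM_mul_invSqrtM_mul_mul hA,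
    ← le_div_iff₀ (prodSmall_pos hA)] at congruence

theorem prodSmall_opMean_le (hpos : ∀ x, 0 < x → 0 < h x) (hmono : MonotoneOn h (Set.Ioi 0))
    (hconc : ∀ x y, 0 < x → 0 < y → √(h x * h y) ≤ h √(x * y))
    (hA : A.PosDef) (hB : B.PosDef) (hkn : k ≤ n) :
    prodSmall (opMean h A B) k ≤
      h ((prodLarge B k / prodSmall A k) ^ (k : ℝ)⁻¹) ^ k * prodSmall A k := by
  set C := invSqrtM A * B * invSqrtM A
  have hC : C.PosDef := posDef_invSqrtM_mul_mul hA hB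
  have hlargeC : 0 < prodLarge C k := prodLarge_pos hC
  have hCB : prodLarge C k ≤ prodLarge B k / prodSmall A k :=
    prodLarge_invSqrtM_mul_mul_le hA hB hkn
  have congruence := prodSmall_conjTranspose_mul_mul_le
    (posSemidef_cfc_of_posDef hC hpos) (sqrtM A) hkn
  rw [isHermitian_sqrtM, sqrtM_mul_self hA.posSemidef] at congruence
  refine congruence.trans (mul_le_mul_of_nonneg_right ?_ (prodSmall_pos hA).le)
  calc prodLarge (cfc h C) k
      ≤ h (prodLarge C k ^ (k : ℝ)⁻¹) ^ k :=
        prodLarge_cfc_le_of_geometrically_concave hC hpos hmono hconc hkn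
    _ ≤ h ((prodLarge B k / prodSmall A k) ^ (k : ℝ)⁻¹) ^ k :=
        monotoneOn_comp_rpow_inv_pow hpos hmono k hlargeC (hlargeC.trans_le hCB) hCB

theorem stmt_7_general (hpos : ∀ x, 0 < x → 0 < h x) (hmono : MonotoneOn h (Set.Ioi 0))
    (hconc : ∀ x y, 0 < x → 0 < y → √(h x * h y) ≤ h √(x * y))
    (hA : A.PosDef) (hB : B.PosDef) (hk : 1 ≤ k) (hkn : k ≤ n) :
    prodSmall (opMean h A B) k ^ (k : ℝ)⁻¹ ≤
      prodSmall A k ^ (k : ℝ)⁻¹ *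
        h (prodLarge B k ^ (k : ℝ)⁻¹ / prodSmall A k ^ (k : ℝ)⁻¹) := by
  have hsmall : 0 < prodSmall A k := prodSmall_pos hA
  have hlarge : 0 < prodLarge B k := prodLarge_pos hB
  rw [← Real.div_rpow hlarge.le hsmall.le]
  set t := (prodLarge B k / prodSmall A k) ^ (k : ℝ)⁻¹
  have ht : 0 ≤ h t := (hpos t (by positivity)).le
  calc prodSmall (opMean h A B) k ^ (k : ℝ)⁻¹
      ≤ (h t ^ k * prodSmall A k) ^ (k : ℝ)⁻¹ :=
        Real.rpow_le_rpow (prodSmall_nonneg (posSemidef_opMean hA hB hpos))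
          (prodSmall_opMean_le hpos hmono hconc hA hB hkn) (by positivity)
    _ = prodSmall A k ^ (k : ℝ)⁻¹ * h t := by
        rw [Real.mul_rpow (by positivity) hsmall.le,
          Real.pow_rpow_inv_natCast ht (Nat.one_le_iff_ne_zero.mp hk), mul_comm]

end OperatorMean

theorem stmt_7 {n : ℕ} (h : ℝ → ℝ) (hnn : ∀ x : ℝ, 0 ≤ x → 0 ≤ h x)
    (hcont : ContinuousOn h (Set.Ici 0)) (h1 : h 1 = 1)
    (hposi : ∀ x : ℝ, 0 < x → 0 < h x)
    (hopmono : ∀ (m : ℕ) (X Y : Matrix (Fin m) (Fin m) ℂ), X.PosSemidef →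
      (Y - X).PosSemidef → (cfc h Y - cfc h X).PosSemidef)
    (hgconcave : ∀ x y : ℝ, 0 ≤ x → 0 ≤ y → Real.sqrt (h x * h y) ≤ h (Real.sqrt (x * y)))
    (A B : Matrix (Fin n) (Fin n) ℂ) (hA : A.PosDef) (hB : B.PosDef)
    (k : ℕ) (hk1 : 1 ≤ k) (hkn : k ≤ n) :
    prodSmall (opMean h A B) k ^ ((k : ℝ)⁻¹)
      ≤ (prodSmall A k ^ ((k : ℝ)⁻¹)) *
          h ((prodLarge B k ^ ((k : ℝ)⁻¹)) / (prodSmall A k ^ ((k : ℝ)⁻¹))) :=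
  stmt_7_general hposi ((monotoneOn_of_cfc_monotone (hopmono 1)).mono Set.Ioi_subset_Ici_self)
    (fun x y hx hy => hgconcave x y hx.le hy.le) hA hB hk1 hkn
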